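/- There exists a unique Borel probability measure μ on ∂Γ such that μ(Ω(γ)) = (1/(2n))·(1/(2n−1))^{ℓ(γ)−1} for every nonempty finite reduced word γ in S. -/

import Mathlib

/-!
Existence: a boundary point is the same thing as a first letter together with a sequence of
choices, each step choosing one of the `2n - 1` letters that do not cancel the previous one. Fixing
for every letter `a` a bijection `Fin (2n - 1) ≃ {b // b ≠ a⁻¹}`, this gives a continuous map
(`walkBdry`) from `Fin (2n) × (ℕ → Fin (2n - 1))` to `∂Γ`. The preimage of the cylinder of a
reduced word of length `m + 1` is a box which constrains the first letter and the first `m`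
choices to single values, so the image of the product of uniform measures is the required measure.

Uniqueness: cylinders form a basis of the topology of `∂Γ`, hence generate its Borel
σ-algebra, and two cylinders that meet are nested, so they form a π-system. Cylinders of
non-reduced words are empty and that of the empty word is everything, so the given values determine
a probability measure on the π-system.
-/

open scoped Classical

/-- Formal letters `x, x⁻¹` for `x ∈ 𝔛`: a generator together with a sign. -/
abbrev Letter (X : Type*) := X × Bool

/-- Inversion of a letter: flip the sign. -/
def linv {X : Type*} (s : Letter X) : Letter X := (s.1, !s.2)

/-- A semi-infinite word is reduced if no letter is immediately followed by its inverse. -/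
def IsInfRed {X : Type*} (ω : ℕ → Letter X) : Prop := ∀ k, ω (k + 1) ≠ linv (ω k)

/-- The boundary `∂Γ` of the free group on `X`: the space of semi-infinite reduced words,
topologized as a subspace of the product `(Letter X)^ℕ` with `Letter X` discrete. -/
abbrev Boundary (X : Type*) := {ω : ℕ → Letter X // IsInfRed ω}

instance {X : Type*} : TopologicalSpace (Letter X) := ⊥
instance {X : Type*} : DiscreteTopology (Letter X) := ⟨rfl⟩

/-- A finite word is reduced if no letter is immediately followed by its inverse. -/
def IsRed {X : Type*} (γ : List (Letter X)) : Prop := γ.Chain' fun a b => b ≠ linv a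

/-- Cylinder set `Ω(γ)` of a finite word `γ`. -/
def cyl {X : Type*} (γ : List (Letter X)) : Set (Boundary X) :=
  {ω | ∀ i (h : i < γ.length), ω.1 i = γ.get ⟨i, h⟩}

/-- `∂Γ₁`: boundary points all of whose letters have generator in `X₁`. -/
def bdry1 {X : Type*} (X₁ : Set X) : Set (Boundary X) := {ω | ∀ i, (ω.1 i).1 ∈ X₁}

/-- `(∂Γ₁)^⊥`: boundary points whose first letter has generator outside `X₁`. -/
def perp1 {X : Type*} (X₁ : Set X) : Set (Boundary X) := {ω | (ω.1 0).1 ∉ X₁}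

open scoped ENNReal
open MeasureTheory

instance {X : Type*} : MeasurableSpace (Boundary X) := borel _

instance {X : Type*} : BorelSpace (Boundary X) := ⟨rfl⟩

lemma cyl_eq_empty {X : Type*} {γ : List (Letter X)} (h : ¬ IsRed γ) : cyl γ = ∅ := by
  refine Set.eq_empty_of_forall_notMem fun ω hω => h ?_
  refine List.isChain_iff_getElem.2 fun i hi => ?_
  have h1 : ω.1 i = γ[i] := hω i (by omega)
  have h2 : ω.1 (i + 1) = γ[i + 1] := hω (i + 1) hi
  rw [← h1, ← h2]
  exact ω.2 i

lemma cyl_nil {X : Type*} : cyl ([] : List (Letter X)) = Set.univ :=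
  Set.eq_univ_of_forall fun _ i h => absurd h (by simp)

/-- A cylinder meeting the cylinder of a word of smaller or equal length is contained in it. -/
lemma cyl_subset {X : Type*} {γ δ : List (Letter X)} (hl : γ.length ≤ δ.length)
    (h : (cyl γ ∩ cyl δ).Nonempty) : cyl δ ⊆ cyl γ := by
  obtain ⟨ω, h1, h2⟩ := h
  intro ξ hξ i hi
  rw [hξ i (by omega), ← h2 i (by omega), h1 i hi]

lemma isPiSystem_cyl (X : Type*) : IsPiSystem (Set.range (cyl (X := X))) := by
  rintro _ ⟨γ, rfl⟩ _ ⟨δ, rfl⟩ h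
  rcases le_total γ.length δ.length with hl | hl
  · exact ⟨δ, (Set.inter_eq_right.2 (cyl_subset hl h)).symm⟩
  · exact ⟨γ, (Set.inter_eq_left.2 (cyl_subset hl (Set.inter_comm _ _ ▸ h))).symm⟩

lemma isOpen_cyl {X : Type*} (γ : List (Letter X)) : IsOpen (cyl γ) := by
  have : cyl γ = ⋂ i : Fin γ.length, (fun ω : Boundary X => ω.1 i) ⁻¹' {γ.get i} := by
    ext ω
    simp [cyl, Fin.forall_iff]
  rw [this]
  exact isOpen_iInter_of_finite fun i =>
    (isOpen_discrete _).preimage ((continuous_apply _).comp continuous_subtype_val)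

lemma isTopologicalBasis_cyl (X : Type*) :
    TopologicalSpace.IsTopologicalBasis (Set.range (cyl (X := X))) := by
  refine TopologicalSpace.isTopologicalBasis_of_isOpen_of_nhds ?_ ?_
  · rintro _ ⟨γ, rfl⟩
    exact isOpen_cyl γ
  · intro ω U hω hU
    obtain ⟨V, hV, rfl⟩ := isOpen_induced_iff.1 hU
    obtain ⟨_, ⟨x, k, rfl⟩, hωx, hxV⟩ :=
      (PiNat.isTopologicalBasis_cylinders (fun _ : ℕ => Letter X)).exists_subset_of_mem_open hω hV
    refine ⟨_, ⟨List.ofFn fun i : Fin k => ω.1 i, rfl⟩, fun i hi => by simp, fun ξ hξ => hxV ?_⟩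
    intro i hi
    have := hξ i (by simpa using hi)
    rw [← hωx i hi, this]
    simp

lemma borel_eq_generateFrom_cyl (X : Type*) [Finite X] :
    (inferInstance : MeasurableSpace (Boundary X)) =
      MeasurableSpace.generateFrom (Set.range (cyl (X := X))) := by
  have : SecondCountableTopology (Letter X) :=
    DiscreteTopology.secondCountableTopology_of_countable
  have : SecondCountableTopology (ℕ → Letter X) := inferInstance
  have : SecondCountableTopology (Boundary X) :=
    TopologicalSpace.Subtype.secondCountableTopology _
  exact borel_eq_generateFrom_of_subbasis (isTopologicalBasis_cyl X).eq_generateFrom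

section Walk

variable {X : Type*} {k : ℕ} (E : ∀ a : Letter X, Fin k ≃ {b : Letter X // b ≠ linv a})

/-- The infinite word with first letter `a` in which the letter following `b` in position `i` is
the one numbered `t i` among the letters different from `b⁻¹`. -/
def walk (a : Letter X) (t : ℕ → Fin k) : ℕ → Letter X
  | 0 => a
  | i + 1 => (E (walk a t i) (t i)).1

/-- The parametrization of the boundary by a numbered first letter and a sequence of choices of
non-cancelling letters. -/
def walkBdry {m : ℕ} (e : Fin m ≃ Letter X) (p : Fin m × (ℕ → Fin k)) : Boundary X :=
  ⟨walk E (e p.1) p.2, fun i => (E (walk E (e p.1) p.2 i) (p.2 i)).2⟩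

lemma continuous_walkBdry {m : ℕ} (e : Fin m ≃ Letter X) : Continuous (walkBdry E e) := by
  refine Continuous.subtype_mk (continuous_pi fun i => ?_) _
  induction i with
  | zero => exact continuous_of_discreteTopology.comp continuous_fst
  | succ i ih =>
    have h : Continuous fun q : Letter X × Fin k => (E q.1 q.2).1 := continuous_of_discreteTopology
    exact h.comp (ih.prodMk ((continuous_apply i).comp continuous_snd))

/-- The preimage of the cylinder of a reduced word is a box with singleton sides. -/
lemma preimage_cyl {m : ℕ} (e : Fin m ≃ Letter X) {γ : List (Letter X)} (h0 : γ ≠ [])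
    (hγ : IsRed γ) :
    ∃ (s : Fin m) (c : ℕ → Fin k), walkBdry E e ⁻¹' cyl γ =
      {s} ×ˢ Set.pi (Finset.range (γ.length - 1)) fun i => {c i} := by
  have hpos : 0 < γ.length := List.length_pos_iff.2 h0
  have hk : ∀ i : ℕ, ∃ c : Fin k, ∀ h : i + 1 < γ.length, (E γ[i] c).1 = γ[i + 1] := by
    intro i
    by_cases h : i + 1 < γ.length
    · exact ⟨(E γ[i]).symm ⟨γ[i + 1], List.isChain_iff_getElem.1 hγ i h⟩, fun _ => by simp⟩
    -- The value is irrelevant in this case, but `Fin k` must be inhabited.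
    · exact ⟨(E γ[0]).symm ⟨γ[0], fun h => by
        have := congrArg Prod.snd h
        simp [linv] at this⟩, fun h' => absurd h' h⟩
  choose c hc using hk
  refine ⟨e.symm γ[0], c, ?_⟩
  ext ⟨s, t⟩
  simp only [Set.mem_preimage, Set.mem_prod, Set.mem_singleton_iff, Set.mem_pi, Finset.coe_range,
    Set.mem_Iio]
  constructor
  · intro h
    have hw : ∀ i (hi : i < γ.length), walk E (e s) t i = γ[i] := h
    refine ⟨by rw [← hw 0 hpos]; simp [walk], fun i hi => ?_⟩
    have h1 := hw (i + 1) (by omega)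
    rw [walk, hw i (by omega), ← hc i (by omega)] at h1
    exact (E _).injective (Subtype.ext h1)
  · rintro ⟨rfl, ht⟩
    change ∀ i (hi : i < γ.length), walk E (e (e.symm γ[0])) t i = γ[i]
    intro i
    induction i with
    | zero => intro _; simp [walk]
    | succ i ih =>
      intro hi
      rw [walk, ih (by omega), ht i (by omega), hc i hi]

end Walk

lemma card_ne_linv {X : Type*} [Fintype X] (a : Letter X) :
    Fintype.card {b : Letter X // b ≠ linv a} = 2 * Fintype.card X - 1 := by
  rw [Fintype.card_subtype_compl, Fintype.card_subtype_eq, Fintype.card_prod, Fintype.card_bool,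
    mul_comm]

/-- There exists a unique Borel probability measure `μ` on `∂Γ` with
`μ(Ω(γ)) = (1/(2n))·(1/(2n−1))^{ℓ(γ)−1}` for every nonempty finite reduced word `γ`. -/
theorem stmt11 {X : Type*} [Fintype X] (hn : 2 ≤ Fintype.card X) :
    ∃! μ : Measure (Boundary X), IsProbabilityMeasure μ ∧
      ∀ γ : List (Letter X), γ ≠ [] → IsRed γ →
        μ (cyl γ) = (1 / (2 * (Fintype.card X : ℝ≥0∞))) *
          (1 / (2 * (Fintype.card X : ℝ≥0∞) - 1)) ^ (γ.length - 1) := by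
  set n := Fintype.card X with hnd
  refine existsUnique_of_exists_of_unique ?_ ?_
  · have : NeZero (2 * n) := ⟨by omega⟩
    have : NeZero (2 * n - 1) := ⟨by omega⟩
    have e : Fin (2 * n) ≃ Letter X :=
      (Fintype.equivFinOfCardEq (by rw [Fintype.card_prod, Fintype.card_bool, mul_comm])).symm
    have E : ∀ a : Letter X, Fin (2 * n - 1) ≃ {b : Letter X // b ≠ linv a} := fun a =>
      (Fintype.equivFinOfCardEq (card_ne_linv a)).symm
    have hF : Measurable (walkBdry E e) := (continuous_walkBdry E e).measurable
    let P : Measure (Fin (2 * n) × (ℕ → Fin (2 * n - 1))) :=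
      (PMF.uniformOfFintype (Fin (2 * n))).toMeasure.prod
        (Measure.infinitePi fun _ => (PMF.uniformOfFintype (Fin (2 * n - 1))).toMeasure)
    refine ⟨P.map (walkBdry E e), Measure.isProbabilityMeasure_map hF.aemeasurable, ?_⟩
    intro γ h0 hγ
    rw [Measure.map_apply hF (isOpen_cyl γ).measurableSet]
    obtain ⟨s, c, hs⟩ := preimage_cyl E e h0 hγ
    rw [hs, Measure.prod_prod, Measure.infinitePi_pi _ fun i _ => measurableSet_singleton _]
    simp
  · rintro μ ν ⟨hμ, hμc⟩ ⟨hν, hνc⟩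
    refine ext_of_generate_finite _ (borel_eq_generateFrom_cyl X) (isPiSystem_cyl X) ?_ (by simp)
    rintro _ ⟨γ, rfl⟩
    by_cases hγ : IsRed γ
    · rcases eq_or_ne γ [] with rfl | h0
      · simp [cyl_nil]
      · rw [hμc γ h0 hγ, hνc γ h0 hγ]
    · simp [cyl_eq_empty hγ]
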